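/- Let M be a 2-dimensional linear subspace of the space of skew-symmetric (N+1)×(N+1) complex matrices such that every nonzero matrix in M has rank 2r, where r ≥ 1. Then there exist an integer h with 1 ≤ h ≤ r and 2r + h ≤ N+1, a partition r = r₁ + ⋯ + r_h with r₁ ≥ ⋯ ≥ r_h ≥ 1, an invertible complex (N+1)×(N+1) matrix S, and a basis (A, B) of M such that S A Sᵀ and S B Sᵀ are the block-diagonal matrices diag(F_λ(1,0), 0) and diag(F_λ(0,1), 0), where F_λ is the standard pencil of size (2r+h)×(2r+h) associated to the partition and the zero block has size (N+1−2r−h)×(N+1−2r−h). -/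

import Mathlib

open Matrix

open scoped Classical in
/-- Partial sums of the partition: `partialSum rpart k = r₁ + ⋯ + r_k`. -/
noncomputable def partialSum {h : ℕ} (rpart : Fin h → ℕ) (k : ℕ) : ℕ :=
  ∑ j ∈ Finset.range k, if hj : j < h then rpart ⟨j, hj⟩ else 0

open scoped Classical in
/-- The block-diagonal matrix `F̄(a,b)` with blocks `U_{r₁}(a,b), …, U_{r_h}(a,b)`,
where `U_{r_i}(a,b)` is the `r_i × (r_i+1)` matrix with `a` on the main diagonal and
`b` on the superdiagonal. -/
noncomputable def Fbar {h : ℕ} (rpart : Fin h → ℕ) (r m : ℕ) (a b : ℂ) :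
    Matrix (Fin r) (Fin m) ℂ :=
  Matrix.of fun s t =>
    if ∃ i : Fin h, partialSum rpart i ≤ s.val ∧ s.val < partialSum rpart (i.val + 1) ∧
        t.val = s.val + i.val then a
    else if ∃ i : Fin h, partialSum rpart i ≤ s.val ∧ s.val < partialSum rpart (i.val + 1) ∧
        t.val = s.val + i.val + 1 then b
    else 0

/-- The standard skew-symmetric pencil `F_λ(a,b)` of size `(2r+h)×(2r+h)` associated to a
partition `r = r₁ + ⋯ + r_h`, with block form `[[0, F̄(a,b)], [−F̄(a,b)ᵀ, 0]]`. -/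
noncomputable def Fpencil {h : ℕ} (rpart : Fin h → ℕ) (r : ℕ) (a b : ℂ) :
    Matrix (Fin (2*r + h)) (Fin (2*r + h)) ℂ :=
  Matrix.reindex (finSumFinEquiv.trans (finCongr (by omega)))
    (finSumFinEquiv.trans (finCongr (by omega)))
    (Matrix.fromBlocks 0 (Fbar rpart r (r + h) a b) (-(Fbar rpart r (r + h) a b)ᵀ) 0)

/-!
A greedy argument produces a subspace `K` of dimension `N + 1 - r` which is isotropic for every form
of the pencil: as long as `K` is a proper subspace of a space `W` orthogonal to it, the pairing of a
complement of `K` in `W` with itself is a square pencil, hence degenerate at some point over an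
algebraically closed field, and this yields a vector that enlarges `K` while `W` loses only one
dimension.

By constancy of the rank, `K` is its own orthogonal for each nonzero form. Hence the forms pair a
complement `W` of `K` with `K` by two maps `f, g : W → Kᵛ` such that `f w` and `g w` are
independent for all `w ≠ 0`. Kronecker's theorem puts such a pair in a normal form with only the
blocks `U_ρ`, by induction from the pair (inclusion, `f⁻¹ ∘ g`) on the subspace `g⁻¹ (range f)`.

The remaining entries of the forms, on `W × W`, are removed by replacing `W` with the graph of a map
`ζ : W → K`. The conditions on the entries of `ζ` amount to a recurrence along antidiagonals, which
can always be solved.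
-/

open Module
open LinearMap (BilinForm)

universe u

section IsotropicSubspaces

variable {𝕜 V : Type*} [Field 𝕜] [AddCommGroup V] [Module 𝕜 V]

theorem exists_ne_zero_not_linearIndependent_pair [IsAlgClosed 𝕜] [FiniteDimensional 𝕜 V]
    [Nontrivial V] {V' : Type*} [AddCommGroup V'] [Module 𝕜 V'] [FiniteDimensional 𝕜 V']
    (f g : V →ₗ[𝕜] V') (hdim : finrank 𝕜 V = finrank 𝕜 V') :
    ∃ v ≠ 0, ¬ LinearIndependent 𝕜 ![f v, g v] := by
  by_cases hf : Function.Injective f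
  · let e : V ≃ₗ[𝕜] V' := LinearEquiv.ofInjectiveOfFinrankEq f hf hdim
    obtain ⟨c, hc⟩ := End.exists_eigenvalue (e.symm.toLinearMap ∘ₗ g)
    obtain ⟨v, hv⟩ := hc.exists_hasEigenvector
    have hgv : g v = c • f v := by
      have := hv.apply_eq_smul
      rwa [LinearMap.comp_apply, LinearEquiv.coe_coe, LinearEquiv.symm_apply_eq, map_smul] at this
    refine ⟨v, hv.2, fun h ↦ ?_⟩
    exact one_ne_zero (neg_eq_zero.mp (LinearIndependent.pair_iff.mp h c (-1) (by simp [hgv])).2)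
  · obtain ⟨v, hfv, hv⟩ := (Submodule.ne_bot_iff _).mp (mt LinearMap.ker_eq_bot.mp hf)
    exact ⟨v, hv, fun h ↦ h.ne_zero 0 (LinearMap.mem_ker.mp hfv)⟩

theorem finrank_le_finrank_inf_ker_add_one [FiniteDimensional 𝕜 V] (W : Submodule 𝕜 V)
    (φ : Dual 𝕜 V) : finrank 𝕜 W ≤ finrank 𝕜 ↥(W ⊓ LinearMap.ker φ) + 1 := by
  have hsum := (φ.domRestrict W).finrank_range_add_finrank_ker
  have hrange := (Submodule.finrank_le (LinearMap.range (φ.domRestrict W))).trans_eq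
    (finrank_self 𝕜)
  have hker : finrank 𝕜 (LinearMap.ker (φ.domRestrict W)) = finrank 𝕜 ↥(W ⊓ LinearMap.ker φ) := by
    rw [← Submodule.finrank_map_subtype_eq, LinearMap.domRestrict, LinearMap.ker_comp,
      Submodule.map_comap_subtype]
  omega

/- If `v` is outside the radical of `C` on `W`, shrinking `W` to the hyperplane `v^⊥` costs one
dimension, but the radical grows by `v` itself. -/
theorem finrank_add_finrank_radical_le_inf_ker [FiniteDimensional 𝕜 V] {C : BilinForm 𝕜 V}
    (hC : C.IsAlt) {W : Submodule 𝕜 V} {v : V} (hv : v ∈ W) :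
    finrank 𝕜 W + finrank 𝕜 ↥(W ⊓ C.orthogonal W) ≤
      finrank 𝕜 ↥(W ⊓ LinearMap.ker (C v)) +
        finrank 𝕜 ↥(W ⊓ LinearMap.ker (C v) ⊓ C.orthogonal (W ⊓ LinearMap.ker (C v))) := by
  by_cases hvW : W ≤ LinearMap.ker (C v)
  · rw [inf_eq_left.mpr hvW]
  have hcodim := finrank_le_finrank_inf_ker_add_one W (C v)
  have hlt : W ⊓ C.orthogonal W <
      W ⊓ LinearMap.ker (C v) ⊓ C.orthogonal (W ⊓ LinearMap.ker (C v)) := by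
    refine SetLike.lt_iff_le_and_exists.mpr ⟨?_, v, ?_, ?_⟩
    · rintro x ⟨hxW, hx⟩
      exact ⟨⟨hxW, hx v hv⟩, fun w hw ↦ hx w hw.1⟩
    · exact ⟨⟨hv, hC v⟩, fun w hw ↦ hC.isRefl v w hw.2⟩
    · exact fun h ↦ hvW fun w hw ↦ hC.isRefl w v (h.2 w hw)
  have := Submodule.finrank_lt_finrank_of_lt hlt
  omega

theorem exists_notMem_not_linearIndependent_restrict [IsAlgClosed 𝕜] [FiniteDimensional 𝕜 V]
    {A B : BilinForm 𝕜 V} (hA : A.IsAlt) (hB : B.IsAlt) {K W : Submodule 𝕜 V} (hKW : K < W)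
    (hWA : W ≤ A.orthogonal K) (hWB : W ≤ B.orthogonal K) :
    ∃ v ∈ W, v ∉ K ∧ ∃ a b : 𝕜, (a ≠ 0 ∨ b ≠ 0) ∧ ∀ x ∈ W, a * A v x + b * B v x = 0 := by
  obtain ⟨K', hK'⟩ := K.exists_isCompl
  have hsup : K ⊔ (K' ⊓ W) = W := by
    rw [← sup_inf_assoc_of_le _ hKW.le, hK'.sup_eq_top, top_inf_eq]
  have : Nontrivial ↥(K' ⊓ W) := by
    rw [Submodule.nontrivial_iff_ne_bot]
    rintro h
    exact hKW.ne (by rw [← hsup, h, sup_bot_eq])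
  obtain ⟨v, hv0, hv⟩ := exists_ne_zero_not_linearIndependent_pair
    (A.restrict (K' ⊓ W)) (B.restrict (K' ⊓ W)) Subspace.dual_finrank_eq.symm
  have hvK : (v : V) ∉ K := fun h ↦
    hv0 (Subtype.ext (Submodule.disjoint_def.mp hK'.disjoint v h v.2.1))
  rw [LinearIndependent.pair_iff] at hv
  push Not at hv
  obtain ⟨a, b, hab, hne⟩ := hv
  refine ⟨v, v.2.2, hvK, a, b, not_and_or.mp fun h ↦ hne h.1 h.2, fun x hx ↦ ?_⟩
  rw [← hsup] at hx
  obtain ⟨k, hk, x', hx', rfl⟩ := Submodule.mem_sup.mp hx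
  have hAk : A v k = 0 := hA.isRefl k v (hWA v.2.2 k hk)
  have hBk : B v k = 0 := hB.isRefl k v (hWB v.2.2 k hk)
  have := LinearMap.congr_fun hab ⟨x', hx'⟩
  rw [map_add, map_add, hAk, hBk, zero_add, zero_add]
  exact this

theorem eventually_cofinite_inf_ker_inf_ker_eq {φ ψ : Dual 𝕜 V} {W : Submodule 𝕜 V} {a b : 𝕜}
    (hab : a ≠ 0 ∨ b ≠ 0) (h : ∀ x ∈ W, a * φ x + b * ψ x = 0) :
    ∀ᶠ s : 𝕜 in Filter.cofinite,
      W ⊓ LinearMap.ker φ ⊓ LinearMap.ker ψ = W ⊓ LinearMap.ker (φ + s • ψ) := by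
  have hfin : {s | b - s * a = 0}.Finite := by
    refine (Set.finite_singleton (b / a)).subset fun s (hs : b - s * a = 0) ↦ ?_
    have ha : a ≠ 0 := fun ha ↦ by simp_all
    exact eq_div_of_mul_eq ha (sub_eq_zero.mp hs).symm
  filter_upwards [hfin.compl_mem_cofinite] with s hs
  ext x
  suffices x ∈ W → (φ x = 0 ∧ ψ x = 0 ↔ φ x + s * ψ x = 0) by simpa [and_assoc] using this
  refine fun hx ↦ ⟨fun hφψ ↦ by simp [hφψ], fun hφψ ↦ ?_⟩
  have hmul : (b - s * a) * ψ x = 0 := by linear_combination h x hx - a * hφψ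
  have hψ : ψ x = 0 := (mul_eq_zero.mp hmul).resolve_left hs
  exact ⟨by simpa [hψ] using hφψ, hψ⟩

/- Enlarge `K` by `v` and shrink `W` to the common kernel of `A v` and `B v`: as these are linearly
dependent on `W`, that kernel is `W ⊓ ker ((A + s • B) v)` for all `s` but at most one, and the
bound on the radical of `A + s • B` survives for these `s`. -/
theorem exists_isotropic_of_finrank_radical [IsAlgClosed 𝕜] [FiniteDimensional 𝕜 V]
    {A B : BilinForm 𝕜 V} (hA : A.IsAlt) (hB : B.IsAlt) {d : ℕ} (K W : Submodule 𝕜 V)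
    (hKW : K ≤ W) (hWA : W ≤ A.orthogonal K) (hWB : W ≤ B.orthogonal K)
    (hd : ∀ᶠ s : 𝕜 in Filter.cofinite,
      d ≤ finrank 𝕜 W + finrank 𝕜 ↥(W ⊓ (A + s • B).orthogonal W)) :
    ∃ L : Submodule 𝕜 V, L ≤ A.orthogonal L ∧ L ≤ B.orthogonal L ∧ d ≤ 2 * finrank 𝕜 L := by
  induction K using WellFoundedGT.induction generalizing W with
  | _ K ih =>
  obtain rfl | hlt := hKW.eq_or_lt
  · obtain ⟨s, hs⟩ := hd.exists
    have := Submodule.finrank_mono (inf_le_left : K ⊓ (A + s • B).orthogonal K ≤ K)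
    exact ⟨K, hWA, hWB, by omega⟩
  obtain ⟨v, hvW, hvK, a, b, hab, hv⟩ :=
    exists_notMem_not_linearIndependent_restrict hA hB hlt hWA hWB
  let W' := W ⊓ LinearMap.ker (A v) ⊓ LinearMap.ker (B v)
  have hvW' : v ∈ W' := ⟨⟨hvW, hA v⟩, hB v⟩
  have horth {C : BilinForm 𝕜 V} (hC : W ≤ C.orthogonal K) (hCv : W' ≤ LinearMap.ker (C v)) :
      W' ≤ C.orthogonal (K ⊔ 𝕜 ∙ v) := by
    intro x hx y hy
    obtain ⟨k, hk, _, ht, rfl⟩ := Submodule.mem_sup.mp hy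
    obtain ⟨t, rfl⟩ := Submodule.mem_span_singleton.mp ht
    have hkx : C k x = 0 := hC hx.1.1 k hk
    have hvx : C v x = 0 := hCv hx
    simp [hkx, hvx]
  refine ih (K ⊔ 𝕜 ∙ v) ?_ W' ?_ (horth hWA (inf_le_left.trans inf_le_right))
    (horth hWB inf_le_right) ?_
  · exact left_lt_sup.mpr fun h ↦ hvK (h (Submodule.mem_span_singleton_self v))
  · refine sup_le (fun k hk ↦ ?_) ((Submodule.span_singleton_le_iff_mem _ _).mpr hvW')
    exact ⟨⟨hKW hk, hA.isRefl k v (hWA hvW k hk)⟩, hB.isRefl k v (hWB hvW k hk)⟩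
  · filter_upwards [hd, eventually_cofinite_inf_ker_inf_ker_eq hab hv] with s hds hs
    have hC : (A + s • B).IsAlt := fun x ↦ by simp [hA x, hB x]
    have hW' : W' = W ⊓ LinearMap.ker ((A + s • B) v) := hs
    rw [hW']
    exact hds.trans (finrank_add_finrank_radical_le_inf_ker hC hvW)

/-- The pencil spanned by two bilinear forms has constant rank `n`: every nontrivial linear
combination of them has rank `n`. -/
def HasConstantRank (A B : BilinForm 𝕜 V) (n : ℕ) : Prop :=
  ∀ a b : 𝕜, a ≠ 0 ∨ b ≠ 0 → finrank 𝕜 (LinearMap.range (a • A + b • B)) = n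

theorem HasConstantRank.exists_isotropic [IsAlgClosed 𝕜] [FiniteDimensional 𝕜 V]
    {A B : BilinForm 𝕜 V} {r : ℕ} (hAB : HasConstantRank A B (2 * r)) (hA : A.IsAlt)
    (hB : B.IsAlt) :
    ∃ K : Submodule 𝕜 V, K ≤ A.orthogonal K ∧ K ≤ B.orthogonal K ∧
      finrank 𝕜 V ≤ finrank 𝕜 K + r := by
  obtain ⟨K, hKA, hKB, hK⟩ := exists_isotropic_of_finrank_radical hA hB
    (d := 2 * (finrank 𝕜 V - r)) ⊥ ⊤ bot_le (by simp) (by simp) (.of_forall fun s ↦ by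
      have hrank := hAB 1 s (.inl one_ne_zero)
      have hker := (A + s • B).finrank_range_add_finrank_ker
      have hC : (A + s • B).IsAlt := fun x ↦ by simp [hA x, hB x]
      rw [one_smul] at hrank
      rw [top_inf_eq, LinearMap.BilinForm.orthogonal_top_eq_ker hC.isRefl, finrank_top]
      omega)
  exact ⟨K, hKA, hKB, by omega⟩

theorem orthogonal_eq_self_of_le_finrank [FiniteDimensional 𝕜 V] {C : BilinForm 𝕜 V}
    (hC : C.IsRefl) {K : Submodule 𝕜 V} (hK : K ≤ C.orthogonal K)
    (hdim : finrank 𝕜 V + finrank 𝕜 (LinearMap.ker C) ≤ 2 * finrank 𝕜 K) :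
    C.orthogonal K = K := by
  have hsum := LinearMap.BilinForm.finrank_add_finrank_orthogonal hC K
  have hinf : finrank 𝕜 ↥(K ⊓ C.orthogonal ⊤) ≤ finrank 𝕜 (LinearMap.ker C) := by
    rw [LinearMap.BilinForm.orthogonal_top_eq_ker hC]
    exact Submodule.finrank_mono inf_le_right
  exact (Submodule.eq_of_le_of_finrank_le hK (by omega)).symm

theorem two_mul_finrank_of_orthogonal_eq_self [FiniteDimensional 𝕜 V] {C : BilinForm 𝕜 V}
    (hC : C.IsRefl) {K : Submodule 𝕜 V} (hK : C.orthogonal K = K) :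
    2 * finrank 𝕜 K = finrank 𝕜 V + finrank 𝕜 (LinearMap.ker C) := by
  have hsum := LinearMap.BilinForm.finrank_add_finrank_orthogonal hC K
  have hker : C.orthogonal ⊤ ≤ K := (C.orthogonal_le le_top).trans hK.le
  rw [hK, inf_eq_right.mpr hker, LinearMap.BilinForm.orthogonal_top_eq_ker hC] at hsum
  omega

theorem HasConstantRank.exists_isCompl_isotropic [IsAlgClosed 𝕜] [FiniteDimensional 𝕜 V]
    {A B : BilinForm 𝕜 V} {r : ℕ} (hAB : HasConstantRank A B (2 * r)) (hA : A.IsAlt)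
    (hB : B.IsAlt) :
    ∃ W K : Submodule 𝕜 V, IsCompl W K ∧ K ≤ A.orthogonal K ∧ K ≤ B.orthogonal K ∧
      finrank 𝕜 W = r ∧ ∀ w : W, w ≠ 0 →
        LinearIndependent 𝕜 ![A.domRestrict₁₂ W K w, B.domRestrict₁₂ W K w] := by
  obtain ⟨K, hKA, hKB, hdim⟩ := hAB.exists_isotropic hA hB
  obtain ⟨W, hKW⟩ := K.exists_isCompl
  have hrefl (a b : 𝕜) : (a • A + b • B).IsRefl :=
    LinearMap.IsAlt.isRefl fun x ↦ by simp [hA x, hB x]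
  have hrank (a b : 𝕜) (hab : a ≠ 0 ∨ b ≠ 0) :
      finrank 𝕜 V = 2 * r + finrank 𝕜 (LinearMap.ker (a • A + b • B)) := by
    rw [← hAB a b hab, LinearMap.finrank_range_add_finrank_ker]
  have horth (a b : 𝕜) (hab : a ≠ 0 ∨ b ≠ 0) : (a • A + b • B).orthogonal K = K := by
    refine orthogonal_eq_self_of_le_finrank (hrefl a b) (fun x hx k hk ↦ ?_) ?_
    · have hA0 : A k x = 0 := hKA hx k hk
      have hB0 : B k x = 0 := hKB hx k hk
      simp [hA0, hB0]
    · have := hrank a b hab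
      omega
  refine ⟨W, K, hKW.symm, hKA, hKB, ?_, fun w hw ↦ ?_⟩
  · have h10 : (1 : 𝕜) ≠ 0 ∨ (0 : 𝕜) ≠ 0 := .inl one_ne_zero
    have := two_mul_finrank_of_orthogonal_eq_self (hrefl 1 0) (horth 1 0 h10)
    have := hrank 1 0 h10
    have := Submodule.finrank_add_eq_of_isCompl hKW
    omega
  · refine LinearIndependent.pair_iff.mpr fun a b hab ↦ ?_
    by_contra hne
    have hwK : (w : V) ∈ (a • A + b • B).orthogonal K := fun k hk ↦
      hrefl a b _ _ (LinearMap.congr_fun hab ⟨k, hk⟩)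
    rw [horth a b (not_and_or.mp hne)] at hwK
    exact hw (Subtype.ext (Submodule.disjoint_def.mp hKW.disjoint w hwK w.2))

end IsotropicSubspaces

section KroneckerForm

theorem exists_basis_sum_extend {𝕜 V ι : Type*} [Field 𝕜] [AddCommGroup V] [Module 𝕜 V]
    [FiniteDimensional 𝕜 V] {v : ι → V} (hv : LinearIndependent 𝕜 v) :
    ∃ (k : ℕ) (b : Basis (ι ⊕ Fin k) 𝕜 V), ∀ i, b (Sum.inl i) = v i := by
  obtain ⟨C, hC⟩ := (Submodule.span 𝕜 (Set.range v)).exists_isCompl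
  refine ⟨_, ((Basis.span hv).prod (finBasis 𝕜 C)).map (Submodule.prodEquivOfIsCompl _ _ hC),
    fun i ↦ ?_⟩
  simp [Basis.span_apply]

/-- Adjoining to each block of a sigma type of `Fin`s a new last index. -/
def sigmaFinSucc {ι : Type*} (n : ι → ℕ) : (Σ i, Fin (n i)) ⊕ ι ≃ Σ i, Fin (n i + 1) where
  toFun := Sum.elim (fun p ↦ ⟨p.1, p.2.castSucc⟩) (fun i ↦ ⟨i, Fin.last _⟩)
  invFun p := Fin.lastCases (motive := fun _ ↦ (Σ i, Fin (n i)) ⊕ ι) (Sum.inr p.1)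
    (fun s ↦ Sum.inl ⟨p.1, s⟩) p.2
  left_inv := by rintro (⟨i, s⟩ | i) <;> simp
  right_inv := by
    rintro ⟨i, s⟩
    cases s using Fin.lastCases <;> simp

variable {𝕜 : Type*} [Field 𝕜]

/-- Simultaneous normal form of a pair of linear maps `f`, `g` with only minimal-index blocks of one
kind: on the block `i` the maps `f` and `g` are the two coordinate inclusions
`𝕜 ^ ρ i → 𝕜 ^ (ρ i + 1)`. Blocks with `ρ i = 0` record basis vectors of `Y` outside
`range f + range g`. -/
structure KroneckerForm {U Y ι : Type*} [AddCommGroup U] [Module 𝕜 U] [AddCommGroup Y]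
    [Module 𝕜 Y] (f g : U →ₗ[𝕜] Y) (ρ : ι → ℕ) where
  source : Basis (Σ i, Fin (ρ i)) 𝕜 U
  target : Basis (Σ i, Fin (ρ i + 1)) 𝕜 Y
  map_fst (i : ι) (s : Fin (ρ i)) : f (source ⟨i, s⟩) = target ⟨i, s.castSucc⟩
  map_snd (i : ι) (s : Fin (ρ i)) : g (source ⟨i, s⟩) = target ⟨i, s.succ⟩

theorem linearIndependent_sumElim_map {U Y α β γ : Type*} [AddCommGroup U] [Module 𝕜 U]
    [AddCommGroup Y] [Module 𝕜 Y] {f g : U →ₗ[𝕜] Y} (hf : Function.Injective f)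
    (hg : Function.Injective g) (b : Basis γ 𝕜 U) (e : α ⊕ β ≃ γ)
    (hb : (LinearMap.range f).comap g ≤ Submodule.span 𝕜 (Set.range (b ∘ e ∘ Sum.inl))) :
    LinearIndependent 𝕜 (Sum.elim (f ∘ b) (g ∘ b ∘ e ∘ Sum.inr)) := by
  have hbe : LinearIndependent 𝕜 (b ∘ e) := b.linearIndependent.comp e e.injective
  refine (b.linearIndependent.map' f (LinearMap.ker_eq_bot.mpr hf)).sum_type
    ((hbe.comp Sum.inr Sum.inr_injective).map' g (LinearMap.ker_eq_bot.mpr hg)) ?_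
  rw [Set.range_comp, Set.range_comp g, ← Submodule.map_span, ← Submodule.map_span, b.span_eq,
    Submodule.map_top, Submodule.disjoint_def]
  rintro _ hx ⟨y, hy, rfl⟩
  have hdisj := (linearIndependent_sum.mp hbe).2.2
  rw [Submodule.disjoint_def.mp hdisj y (hb hx) hy, map_zero]

/-- Appending blocks of size `0` to a family of finite blocks adds no index. -/
def sigmaSumElimZero {ι κ : Type*} (ρ : ι → ℕ) :
    (Σ j : ι ⊕ κ, Fin (Sum.elim ρ 0 j)) ≃ Σ i, Fin (ρ i) :=
  (Equiv.sumSigmaDistrib _).trans (@Equiv.sumEmpty _ _ ⟨fun p ↦ p.2.elim0⟩)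

/-- Appending blocks of size `1` to a family of finite blocks adds one index for each of them. -/
def sigmaSumElimZeroSucc {ι κ : Type*} (ρ : ι → ℕ) :
    (Σ j : ι ⊕ κ, Fin (Sum.elim ρ 0 j + 1)) ≃ (Σ i, Fin (ρ i + 1)) ⊕ κ :=
  (Equiv.sumSigmaDistrib _).trans
    (Equiv.sumCongr (Equiv.refl _) (Equiv.sigmaUnique κ fun _ ↦ Fin 1))

theorem KroneckerForm.exists_of_linearIndependent {U Y ι : Type*} [AddCommGroup U] [Module 𝕜 U]
    [AddCommGroup Y] [Module 𝕜 Y] [FiniteDimensional 𝕜 Y] {f g : U →ₗ[𝕜] Y} {ρ : ι → ℕ}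
    (u : Basis (Σ i, Fin (ρ i)) 𝕜 U) {v : (Σ i, Fin (ρ i + 1)) → Y} (hv : LinearIndependent 𝕜 v)
    (hf : ∀ i s, f (u ⟨i, s⟩) = v ⟨i, s.castSucc⟩) (hg : ∀ i s, g (u ⟨i, s⟩) = v ⟨i, s.succ⟩) :
    ∃ k : ℕ, Nonempty (KroneckerForm f g (Sum.elim ρ (0 : Fin k → ℕ))) := by
  obtain ⟨k, b, hb⟩ := exists_basis_sum_extend hv
  refine ⟨k, ⟨u.reindex (sigmaSumElimZero ρ).symm, b.reindex (sigmaSumElimZeroSucc ρ).symm,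
    ?_, ?_⟩⟩
  · rintro (i | j) s
    · rw [Basis.reindex_apply, Basis.reindex_apply]
      exact (hf i s).trans (hb _).symm
    · exact s.elim0
  · rintro (i | j) s
    · rw [Basis.reindex_apply, Basis.reindex_apply]
      exact (hg i s).trans (hb _).symm
    · exact s.elim0

/- A chain `u₀, …, uₙ` with `g uₛ = f uₛ₊₁`, which is a block for the inclusion and `g'`, gives the
block `f u₀, …, f uₙ, g uₙ` of `Y`. -/
theorem KroneckerForm.exists_of_comap_range {U Y ι : Type*} [AddCommGroup U] [Module 𝕜 U]
    [AddCommGroup Y] [Module 𝕜 Y] [FiniteDimensional 𝕜 Y]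
    {f g : U →ₗ[𝕜] Y} (hf : Function.Injective f) (hg : Function.Injective g) {ρ : ι → ℕ}
    {g' : (LinearMap.range f).comap g →ₗ[𝕜] U} (hg' : ∀ x, f (g' x) = g x)
    (F : KroneckerForm ((LinearMap.range f).comap g).subtype g' ρ) :
    ∃ k : ℕ, Nonempty (KroneckerForm f g (Sum.elim (fun i ↦ ρ i + 1) (0 : Fin k → ℕ))) := by
  have hinl (p) : F.target (sigmaFinSucc ρ (Sum.inl p)) = F.source p := (F.map_fst p.1 p.2).symm
  have hv := linearIndependent_sumElim_map hf hg F.target (sigmaFinSucc ρ) <| by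
    rw [show F.target ∘ sigmaFinSucc ρ ∘ Sum.inl =
        ((LinearMap.range f).comap g).subtype ∘ F.source from funext hinl, Set.range_comp,
      ← Submodule.map_span, F.source.span_eq, Submodule.map_top, Submodule.range_subtype]
  refine KroneckerForm.exists_of_linearIndependent F.target
    (hv.comp _ (sigmaFinSucc fun i ↦ ρ i + 1).symm.injective) (fun i s ↦ ?_) fun i s ↦ ?_
  · simp [sigmaFinSucc]
  · cases s using Fin.lastCases with
    | last => simp [sigmaFinSucc]
    | cast s =>
      have hg_target : g (F.target ⟨i, s.castSucc⟩) = f (F.target ⟨i, s.succ⟩) := by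
        rw [← F.map_snd, hg', ← F.map_fst, Submodule.subtype_apply]
      simpa [sigmaFinSucc, ← Fin.castSucc_succ] using hg_target

theorem exists_kroneckerForm [IsAlgClosed 𝕜] {U Y : Type u} [AddCommGroup U] [Module 𝕜 U]
    [AddCommGroup Y] [Module 𝕜 Y] [FiniteDimensional 𝕜 U] [FiniteDimensional 𝕜 Y]
    (f g : U →ₗ[𝕜] Y) (hfg : ∀ x ≠ 0, LinearIndependent 𝕜 ![f x, g x]) :
    ∃ (ι : Type) (_ : Finite ι) (ρ : ι → ℕ), Nonempty (KroneckerForm f g ρ) := by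
  obtain _ | _ := subsingleton_or_nontrivial U
  · obtain ⟨k, hk⟩ := KroneckerForm.exists_of_linearIndependent (f := f) (g := g)
      (ρ := (Empty.elim : Empty → ℕ)) (Basis.empty U) (v := fun p ↦ p.1.elim)
      (linearIndependent_empty_type) (by simp) (by simp)
    exact ⟨_, inferInstance, _, hk⟩
  have hf : Function.Injective f := (injective_iff_map_eq_zero f).mpr fun x hx ↦
    by_contra fun h ↦ (hfg x h).ne_zero 0 hx
  have hg : Function.Injective g := (injective_iff_map_eq_zero g).mpr fun x hx ↦
    by_contra fun h ↦ (hfg x h).ne_zero 1 hx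
  have hdim : finrank 𝕜 U < finrank 𝕜 Y :=
    (LinearMap.finrank_le_finrank_of_injective hf).lt_of_ne fun h ↦
      have ⟨x, hx, hdep⟩ := exists_ne_zero_not_linearIndependent_pair f g h
      hdep (hfg x hx)
  let g' : (LinearMap.range f).comap g →ₗ[𝕜] U :=
    (LinearEquiv.ofInjective f hf).symm ∘ₗ g.restrict (q := LinearMap.range f) fun _ hx ↦ hx
  have hg' (x) : f (g' x) = g x :=
    congrArg Subtype.val ((LinearEquiv.ofInjective f hf).apply_symm_apply _)
  have hfg' (x : (LinearMap.range f).comap g) (hx : x ≠ 0) :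
      LinearIndependent 𝕜 ![(x : U), g' x] := by
    have hfx : f ∘ ![(x : U), g' x] = ![f x, g x] := by
      ext i
      fin_cases i <;> simp [hg']
    exact LinearIndependent.of_comp f (hfx ▸ hfg x (by simpa using hx))
  obtain ⟨ι, _, ρ, ⟨F⟩⟩ := exists_kroneckerForm ((LinearMap.range f).comap g).subtype g' hfg'
  obtain ⟨k, hk⟩ := KroneckerForm.exists_of_comap_range hf hg hg' F
  exact ⟨_, inferInstance, _, hk⟩
termination_by finrank 𝕜 Y

/-- The normal form with its blocks relabelled. -/
noncomputable def KroneckerForm.reindex {U Y ι ι' : Type*} [AddCommGroup U] [Module 𝕜 U]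
    [AddCommGroup Y] [Module 𝕜 Y] {f g : U →ₗ[𝕜] Y} {ρ : ι → ℕ} (F : KroneckerForm f g ρ)
    (e : ι' ≃ ι) : KroneckerForm f g (ρ ∘ e) where
  source := F.source.reindex (Equiv.sigmaCongrLeft e).symm
  target := F.target.reindex (Equiv.sigmaCongrLeft (β := fun i ↦ Fin (ρ i + 1)) e).symm
  map_fst i s := by simpa using F.map_fst (e i) s
  map_snd i s := by simpa using F.map_snd (e i) s

theorem exists_antitone_sumElim_zero {ι : Type*} [Finite ι] (ρ : ι → ℕ) :
    ∃ (h k : ℕ) (σ : Fin h → ℕ) (e : Fin h ⊕ Fin k ≃ ι), (∀ i, 1 ≤ σ i) ∧ Antitone σ ∧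
      ρ ∘ e = Sum.elim σ 0 := by
  have e₁ := Finite.equivFin {i // 1 ≤ ρ i}
  have e₀ := Finite.equivFin {i // ¬ 1 ≤ ρ i}
  let π := Tuple.sort fun i ↦ OrderDual.toDual (ρ (e₁.symm i))
  refine ⟨_, _, fun i ↦ ρ (e₁.symm (π i)),
    (Equiv.sumCongr (π.trans e₁.symm) e₀.symm).trans (Equiv.sumCompl fun i ↦ 1 ≤ ρ i),
    fun i ↦ (e₁.symm (π i)).2, Tuple.monotone_sort fun i ↦ OrderDual.toDual (ρ (e₁.symm i)), ?_⟩
  ext (i | j)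
  · simp
  · simpa using (e₀.symm j).2

theorem exists_kroneckerForm_antitone [IsAlgClosed 𝕜] {U Y : Type u} [AddCommGroup U] [Module 𝕜 U]
    [AddCommGroup Y] [Module 𝕜 Y] [FiniteDimensional 𝕜 U] [FiniteDimensional 𝕜 Y]
    (f g : U →ₗ[𝕜] Y) (hfg : ∀ x ≠ 0, LinearIndependent 𝕜 ![f x, g x]) :
    ∃ (h k : ℕ) (ρ : Fin h → ℕ), (∀ i, 1 ≤ ρ i) ∧ Antitone ρ ∧
      Nonempty (KroneckerForm f g (Sum.elim ρ (0 : Fin k → ℕ))) := by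
  obtain ⟨ι, _, σ, ⟨F⟩⟩ := exists_kroneckerForm f g hfg
  obtain ⟨h, k, ρ, e, hpos, hanti, he⟩ := exists_antitone_sumElim_zero σ
  exact ⟨h, k, ρ, hpos, hanti, ⟨he ▸ F.reindex e⟩⟩

end KroneckerForm

section SkewCorrection

variable {𝕜 : Type*} [Field 𝕜]

theorem exists_antidiagonal_sum {R : Type*} [Zero R] [Add R] (γ : ℕ → ℕ → R) :
    ∃ Z : ℕ → ℕ → R, ∀ s t, Z (s + 1) t = Z s (t + 1) + γ s t :=
  ⟨fun s ↦ s.rec 0 fun s Z t ↦ Z (t + 1) + γ s t, fun _ _ ↦ rfl⟩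

/- The part of `X` antisymmetric under `(i, s) ↔ (j, t)` must be `-α / 2`; the symmetric part is the
symmetrization of a solution of the antidiagonal recurrence. -/
theorem exists_skew_correction_coeff [NeZero (2 : 𝕜)] {ι : Type*} {α β : ι → ℕ → ι → ℕ → 𝕜}
    (hα : ∀ i s j t, α i s j t = -α j t i s) (hβ : ∀ i s j t, β i s j t = -β j t i s) :
    ∃ X : ι → ℕ → ι → ℕ → 𝕜, (∀ i s j t, X j t i s - X i s j t = α i s j t) ∧
      ∀ i s j t, X j t i (s + 1) - X i s j (t + 1) = β i s j t := by
  have h2 : (2 : 𝕜) ≠ 0 := NeZero.ne 2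
  let γ i j s t := β i s j t - α i (s + 1) j t / 2 - α i s j (t + 1) / 2
  choose Z hZ using fun i j ↦ exists_antidiagonal_sum (γ i j)
  refine ⟨fun i s j t ↦ (Z i j s t + Z j i t s) / 2 - α i s j t / 2, fun i s j t ↦ ?_,
    fun i s j t ↦ ?_⟩
  · linear_combination -(1 / 2) * hα j t i s + (α i s j t) * add_halves (1 : 𝕜)
  · have hγ : γ i j s t - γ j i t s = 2 * γ i j s t := by
      linear_combination -hβ j t i s + hα j (t + 1) i s / 2 + hα j t i (s + 1) / 2
    have hγ_half : (γ i j s t - γ j i t s) / 2 = γ i j s t := by rw [hγ, mul_div_cancel_left₀ _ h2]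
    linear_combination hZ i j s t / 2 - hZ j i t s / 2 + hγ_half - hα j t i (s + 1) / 2

theorem exists_predual_basis {κ K : Type*} [AddCommGroup K] [Module 𝕜 K] [FiniteDimensional 𝕜 K]
    [Finite κ] [DecidableEq κ] (t : Basis κ 𝕜 (Dual 𝕜 K)) :
    ∃ k : Basis κ 𝕜 K, ∀ p q, t p (k q) = if p = q then 1 else 0 := by
  refine ⟨t.dualBasis.map (evalEquiv 𝕜 K).symm, fun p q ↦ ?_⟩
  rw [Basis.map_apply, apply_evalEquiv_symm_apply, Basis.dualBasis_apply_self]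

variable {W K ι : Type*} [AddCommGroup W] [Module 𝕜 W] [AddCommGroup K] [Module 𝕜 K]
  [FiniteDimensional 𝕜 K] [Finite ι] {ρ : ι → ℕ} {f g : W →ₗ[𝕜] Dual 𝕜 K}

theorem KroneckerForm.exists_target_source_eq (F : KroneckerForm f g ρ) (X : ι → ℕ → ι → ℕ → 𝕜) :
    ∃ ζ : W →ₗ[𝕜] K, ∀ p q, F.target q (ζ (F.source p)) = X p.1 p.2 q.1 q.2 := by
  classical
  have := Fintype.ofFinite ι
  obtain ⟨k, hk⟩ := exists_predual_basis F.target
  refine ⟨F.source.constr 𝕜 fun p ↦ ∑ q, X p.1 p.2 q.1 q.2 • k q, fun p q ↦ ?_⟩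
  simp [hk]

theorem KroneckerForm.exists_skew_correction [NeZero (2 : 𝕜)] (F : KroneckerForm f g ρ)
    {A B : BilinForm 𝕜 W} (hA : A.IsAlt) (hB : B.IsAlt) :
    ∃ ζ : W →ₗ[𝕜] K, f.compl₂ ζ - (f.compl₂ ζ).flip = A ∧ g.compl₂ ζ - (g.compl₂ ζ).flip = B := by
  let u (i : ι) (s : ℕ) : W := if h : s < ρ i then F.source ⟨i, s, h⟩ else 0
  have hu (p : Σ i, Fin (ρ i)) : u p.1 p.2 = F.source p := dif_pos p.2.2
  obtain ⟨X, hXA, hXB⟩ := exists_skew_correction_coeff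
    (α := fun i s j t ↦ A (u i s) (u j t)) (β := fun i s j t ↦ B (u i s) (u j t))
    (fun _ _ _ _ ↦ (LinearMap.IsAlt.neg hA _ _).symm)
    (fun _ _ _ _ ↦ (LinearMap.IsAlt.neg hB _ _).symm)
  obtain ⟨ζ, hζ⟩ := F.exists_target_source_eq X
  refine ⟨ζ, LinearMap.BilinForm.ext_basis F.source fun p q ↦ ?_,
    LinearMap.BilinForm.ext_basis F.source fun p q ↦ ?_⟩
  · simpa [hu, F.map_fst, hζ] using hXA p.1 p.2 q.1 q.2
  · simpa [hu, F.map_snd, hζ] using hXB p.1 p.2 q.1 q.2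

end SkewCorrection

section Pencils

variable {R : Type*} [NegZeroClass R]

/-- The matrix `F̄(a, b)` of block sizes `ρ i × (ρ i + 1)`, indexed by pairs (block, position in the
block). -/
def kroneckerPencil {ι : Type*} [DecidableEq ι] (ρ : ι → ℕ) (a b : R) :
    Matrix (Σ i, Fin (ρ i)) (Σ i, Fin (ρ i + 1)) R :=
  of fun p q ↦ if q = ⟨p.1, p.2.castSucc⟩ then a else if q = ⟨p.1, p.2.succ⟩ then b else 0

/-- The matrix `F_λ(a, b)`, indexed by pairs (block, position in the block). -/
def skewPencil {ι : Type*} [DecidableEq ι] (ρ : ι → ℕ) (a b : R) :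
    Matrix ((Σ i, Fin (ρ i)) ⊕ (Σ i, Fin (ρ i + 1))) ((Σ i, Fin (ρ i)) ⊕ (Σ i, Fin (ρ i + 1))) R :=
  fromBlocks 0 (kroneckerPencil ρ a b) (-(kroneckerPencil ρ a b)ᵀ) 0

/-- Moving the index of each block of size `0` of a skew pencil, which has one row and one column,
both zero, to the end. -/
def skewPencilZeroBlocks {ι κ : Type*} (ρ : ι → ℕ) :
    (Σ j : ι ⊕ κ, Fin (Sum.elim ρ 0 j)) ⊕ (Σ j : ι ⊕ κ, Fin (Sum.elim ρ 0 j + 1)) ≃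
      ((Σ i, Fin (ρ i)) ⊕ (Σ i, Fin (ρ i + 1))) ⊕ κ :=
  (Equiv.sumCongr (sigmaSumElimZero ρ) (sigmaSumElimZeroSucc ρ)).trans (Equiv.sumAssoc _ _ _).symm

variable {ι κ : Type*} [DecidableEq ι] [DecidableEq κ] (ρ : ι → ℕ) (a b : R)

theorem reindex_kroneckerPencil_sumElim_zero :
    (kroneckerPencil (Sum.elim ρ (0 : κ → ℕ)) a b).reindex (sigmaSumElimZero ρ)
      (sigmaSumElimZeroSucc ρ) = fromCols (kroneckerPencil ρ a b) 0 := by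
  let e := sigmaSumElimZeroSucc (κ := κ) ρ
  ext p q
  change (if e.symm q = e.symm (Sum.inl ⟨p.1, p.2.castSucc⟩) then a else
    if e.symm q = e.symm (Sum.inl ⟨p.1, p.2.succ⟩) then b else 0) = _
  cases q <;> simp [kroneckerPencil]

theorem reindex_skewPencil_sumElim_zero :
    (skewPencil (Sum.elim ρ (0 : κ → ℕ)) a b).reindex (skewPencilZeroBlocks ρ)
      (skewPencilZeroBlocks ρ) = fromBlocks (skewPencil ρ a b) 0 0 0 := by
  have h (p q) := congrFun₂ (reindex_kroneckerPencil_sumElim_zero (κ := κ) ρ a b) p q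
  simp only [reindex_apply, submatrix_apply] at h
  ext ((p | p) | p) ((q | q) | q) <;> simp [skewPencilZeroBlocks, skewPencil, h]

end Pencils

section SkewNormalForm

variable {𝕜 : Type*} [Field 𝕜]

/-- The identification `V ≃ W × K` in which the complement `W` of `K` is replaced by the graph
`{w + ζ w}` of a map `ζ : W → K`. -/
noncomputable def graphProdEquiv {V : Type*} [AddCommGroup V] [Module 𝕜 V] {W K : Submodule 𝕜 V}
    (hWK : IsCompl W K) (ζ : W →ₗ[𝕜] K) : (W × K) ≃ₗ[𝕜] V :=
  ((LinearEquiv.refl 𝕜 W).skewProd (LinearEquiv.refl 𝕜 K) ζ).trans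
    (Submodule.prodEquivOfIsCompl W K hWK)

theorem toMatrix_prod_map_graphProdEquiv {V α β : Type*} [AddCommGroup V] [Module 𝕜 V] [Fintype α]
    [DecidableEq α] [Fintype β] [DecidableEq β] {C : BilinForm 𝕜 V} (hC : C.IsAlt)
    {W K : Submodule 𝕜 V} (hWK : IsCompl W K) (hK : K ≤ C.orthogonal K) {ζ : W →ₗ[𝕜] K}
    (hζ : (C.domRestrict₁₂ W K).compl₂ ζ - ((C.domRestrict₁₂ W K).compl₂ ζ).flip = -C.restrict W)
    (u : Basis α 𝕜 W) (k : Basis β 𝕜 K) {L : Matrix α β 𝕜} (hL : ∀ p q, C (u p) (k q) = L p q) :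
    LinearMap.BilinForm.toMatrix ((u.prod k).map (graphProdEquiv hWK ζ)) C =
      fromBlocks 0 L (-Lᵀ) 0 := by
  have hKK (x y : K) : C x y = 0 := hK y.2 x x.2
  have hKW (x : K) (w : W) : C x w = -C w x := (LinearMap.IsAlt.neg hC _ _).symm
  ext (p | p) (q | q)
  · have : C (u p) (ζ (u q)) - C (u q) (ζ (u p)) = -C (u p) (u q) :=
      LinearMap.congr_fun₂ hζ (u p) (u q)
    suffices C (u p) (u q) + C (u p) (ζ (u q)) + -C (u q) (ζ (u p)) = 0 by
      simpa [graphProdEquiv, LinearMap.BilinForm.toMatrix_apply, hKK, hKW]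
    linear_combination this
  · simp [graphProdEquiv, LinearMap.BilinForm.toMatrix_apply, hKK, hL]
  · simp [graphProdEquiv, LinearMap.BilinForm.toMatrix_apply, hKK, hKW, hL]
  · simp [graphProdEquiv, LinearMap.BilinForm.toMatrix_apply, hKK]

theorem KroneckerForm.exists_basis_toMatrix_eq_skewPencil {V ι : Type*} [AddCommGroup V]
    [Module 𝕜 V] [FiniteDimensional 𝕜 V] [NeZero (2 : 𝕜)] {A B : BilinForm 𝕜 V} (hA : A.IsAlt)
    (hB : B.IsAlt) {W K : Submodule 𝕜 V} (hWK : IsCompl W K) (hKA : K ≤ A.orthogonal K)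
    (hKB : K ≤ B.orthogonal K) [Fintype ι] [DecidableEq ι] {ρ : ι → ℕ}
    (F : KroneckerForm (A.domRestrict₁₂ W K) (B.domRestrict₁₂ W K) ρ) :
    ∃ b : Basis ((Σ i, Fin (ρ i)) ⊕ (Σ i, Fin (ρ i + 1))) 𝕜 V,
      LinearMap.BilinForm.toMatrix b A = skewPencil ρ 1 0 ∧
      LinearMap.BilinForm.toMatrix b B = skewPencil ρ 0 1 := by
  obtain ⟨ζ, hζA, hζB⟩ := F.exists_skew_correction (A := -A.restrict W) (B := -B.restrict W)
    (fun w ↦ by simp [hA _]) (fun w ↦ by simp [hB _])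
  obtain ⟨k, hk⟩ := exists_predual_basis F.target
  refine ⟨(F.source.prod k).map (graphProdEquiv hWK ζ),
    toMatrix_prod_map_graphProdEquiv hA hWK hKA hζA _ _ fun p q ↦ ?_,
    toMatrix_prod_map_graphProdEquiv hB hWK hKB hζB _ _ fun p q ↦ ?_⟩
  · rw [← LinearMap.domRestrict₁₂_apply, F.map_fst, hk]
    simp [kroneckerPencil, eq_comm]
  · rw [← LinearMap.domRestrict₁₂_apply, F.map_snd, hk]
    obtain rfl | hq := eq_or_ne q ⟨p.1, p.2.succ⟩
    · simp [kroneckerPencil, Fin.castSucc_lt_succ.ne']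
    · simp [kroneckerPencil, hq, hq.symm]

theorem HasConstantRank.exists_basis_toMatrix_eq_fromBlocks {𝕜 V : Type u} [Field 𝕜]
    [IsAlgClosed 𝕜] [NeZero (2 : 𝕜)] [AddCommGroup V] [Module 𝕜 V] [FiniteDimensional 𝕜 V]
    {A B : BilinForm 𝕜 V} {r : ℕ} (hAB : HasConstantRank A B (2 * r)) (hA : A.IsAlt)
    (hB : B.IsAlt) :
    ∃ (h k : ℕ) (ρ : Fin h → ℕ)
      (b : Basis (((Σ i, Fin (ρ i)) ⊕ (Σ i, Fin (ρ i + 1))) ⊕ Fin k) 𝕜 V),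
      (∀ i, 1 ≤ ρ i) ∧ Antitone ρ ∧ ∑ i, ρ i = r ∧
      LinearMap.BilinForm.toMatrix b A = fromBlocks (skewPencil ρ 1 0) 0 0 0 ∧
      LinearMap.BilinForm.toMatrix b B = fromBlocks (skewPencil ρ 0 1) 0 0 0 := by
  obtain ⟨W, K, hWK, hKA, hKB, hW, hpair⟩ := hAB.exists_isCompl_isotropic hA hB
  obtain ⟨h, k, ρ, hpos, hanti, ⟨F⟩⟩ := exists_kroneckerForm_antitone _ _ hpair
  obtain ⟨b, hbA, hbB⟩ := F.exists_basis_toMatrix_eq_skewPencil hA hB hWK hKA hKB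
  have hsum : ∑ i, ρ i = r := by
    rw [← hW, finrank_eq_card_basis F.source, Fintype.card_congr (sigmaSumElimZero ρ)]
    simp
  refine ⟨h, k, ρ, b.reindex (skewPencilZeroBlocks ρ), hpos, hanti, hsum, ?_, ?_⟩
  · rw [← reindex_skewPencil_sumElim_zero, ← hbA]
    ext
    simp [LinearMap.BilinForm.toMatrix_apply]
  · rw [← reindex_skewPencil_sumElim_zero, ← hbB]
    ext
    simp [LinearMap.BilinForm.toMatrix_apply]

end SkewNormalForm

section CongruenceOfMatrices

variable {𝕜 : Type*} [Field 𝕜]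

theorem isAlt_toBilin' {R n : Type*} [CommRing R] [NoZeroDivisors R] [NeZero (2 : R)] [Fintype n]
    [DecidableEq n] {A : Matrix n n R} (hA : Aᵀ = -A) : (toBilin' A).IsAlt := by
  intro v
  have h : v ⬝ᵥ A *ᵥ v = -(v ⬝ᵥ A *ᵥ v) := by
    conv_lhs => rw [dotProduct_mulVec, dotProduct_comm, ← mulVec_transpose, hA, neg_mulVec,
      dotProduct_neg]
  have h2 : 2 * (v ⬝ᵥ A *ᵥ v) = 0 := by linear_combination h
  rw [toBilin'_apply']
  exact (mul_eq_zero.mp h2).resolve_left (NeZero.ne 2)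

theorem finrank_range_toBilin' {n : Type*} [Fintype n] [DecidableEq n]
    (A : Matrix n n 𝕜) : finrank 𝕜 (LinearMap.range (toBilin' A)) = A.rank := by
  have h : toBilin' A = (dotProductEquiv 𝕜 n).toLinearMap ∘ₗ Aᵀ.mulVecLin := by
    ext1 v
    ext w
    simp [toBilin'_apply']
  rw [h, LinearMap.range_comp, LinearEquiv.finrank_map_eq, ← rank_transpose A, rank]

theorem of_reindex_mul_mul_transpose {n ι : Type*} [Fintype n] [DecidableEq n] [Fintype ι]
    [DecidableEq ι] (b : Basis ι 𝕜 (n → 𝕜)) (e : ι ≃ n) (A : Matrix n n 𝕜) :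
    of (b.reindex e) * A * (of (b.reindex e))ᵀ =
      (LinearMap.BilinForm.toMatrix b (toBilin' A)).reindex e e := by
  ext i j
  rw [reindex_apply, submatrix_apply, LinearMap.BilinForm.toMatrix_apply, toBilin'_apply',
    Matrix.mul_assoc, mul_apply', ← b.reindex_apply, ← b.reindex_apply]
  rfl

theorem exists_linearIndependent_pair_span_eq {V : Type*} [AddCommGroup V] [Module 𝕜 V]
    {M : Submodule 𝕜 V} (hM : finrank 𝕜 M = 2) :
    ∃ x ∈ M, ∃ y ∈ M, LinearIndependent 𝕜 ![x, y] ∧ Submodule.span 𝕜 {x, y} = M := by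
  have : Module.Finite 𝕜 M := finite_of_finrank_pos (by omega)
  let b := finBasisOfFinrankEq 𝕜 M hM
  have hb : M.subtype ∘ b = ![(b 0 : V), (b 1 : V)] := by
    ext i
    fin_cases i <;> rfl
  refine ⟨b 0, (b 0).2, b 1, (b 1).2, ?_, ?_⟩
  · rw [← hb]
    exact b.linearIndependent.map' M.subtype (Submodule.ker_subtype M)
  · rw [← range_cons_cons_empty _ _ ![], ← hb, Set.range_comp, ← Submodule.map_span, b.span_eq,
      Submodule.map_top, Submodule.range_subtype]

theorem exists_isUnit_mul_mul_transpose_eq_skewPencil {𝕜 : Type u} [Field 𝕜] [IsAlgClosed 𝕜]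
    [NeZero (2 : 𝕜)] {n : Type} [Fintype n] [DecidableEq n] {A B : Matrix n n 𝕜} (hA : Aᵀ = -A)
    (hB : Bᵀ = -B) {r : ℕ}
    (hrank : ∀ a b : 𝕜, a ≠ 0 ∨ b ≠ 0 → (a • A + b • B).rank = 2 * r) :
    ∃ (h k : ℕ) (ρ : Fin h → ℕ), (∀ i, 1 ≤ ρ i) ∧ Antitone ρ ∧ ∑ i, ρ i = r ∧
      Fintype.card n = 2 * r + h + k ∧
      ∀ e : ((Σ i, Fin (ρ i)) ⊕ (Σ i, Fin (ρ i + 1))) ⊕ Fin k ≃ n, ∃ S : Matrix n n 𝕜, IsUnit S ∧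
        S * A * Sᵀ = (fromBlocks (skewPencil ρ 1 0) 0 0 0).reindex e e ∧
        S * B * Sᵀ = (fromBlocks (skewPencil ρ 0 1) 0 0 0).reindex e e := by
  have hAB : HasConstantRank (toBilin' A) (toBilin' B) (2 * r) := fun a b hab ↦ by
    rw [← map_smul, ← map_smul, ← map_add, finrank_range_toBilin', hrank a b hab]
  obtain ⟨h, k, ρ, b, hpos, hanti, hsum, hbA, hbB⟩ :=
    hAB.exists_basis_toMatrix_eq_fromBlocks (isAlt_toBilin' hA) (isAlt_toBilin' hB)
  have hcard : Fintype.card n = 2 * r + h + k := by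
    rw [← finrank_fintype_fun_eq_card 𝕜, finrank_eq_card_basis b]
    simp only [Fintype.card_sum, Fintype.card_sigma, Fintype.card_fin, Finset.sum_add_distrib,
      Finset.sum_const, Finset.card_univ, smul_eq_mul, hsum]
    ring
  refine ⟨h, k, ρ, hpos, hanti, hsum, hcard, fun e ↦ ⟨of (b.reindex e), ?_, ?_, ?_⟩⟩
  · exact linearIndependent_rows_iff_isUnit.mp (b.reindex e).linearIndependent
  · rw [of_reindex_mul_mul_transpose, hbA]
  · rw [of_reindex_mul_mul_transpose, hbB]

end CongruenceOfMatrices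

section StandardPencil

variable {h : ℕ} (ρ : Fin h → ℕ)

theorem partialSum_succ (i : Fin h) : partialSum ρ (i + 1) = partialSum ρ i + ρ i := by
  rw [partialSum, Finset.sum_range_succ, dif_pos i.2]
  rfl

theorem monotone_partialSum : Monotone (partialSum ρ) := fun _ _ hkl ↦
  Finset.sum_le_sum_of_subset (Finset.range_subset_range.mpr hkl)

theorem partialSum_eq_sum_castLE {k : ℕ} (hk : k ≤ h) :
    partialSum ρ k = ∑ i : Fin k, ρ (i.castLE hk) := by
  rw [partialSum, Finset.sum_range]
  exact Finset.sum_congr rfl fun i _ ↦ dif_pos (i.2.trans_le hk)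

theorem val_finSigmaFinEquiv (p : Σ i, Fin (ρ i)) :
    (finSigmaFinEquiv p : ℕ) = partialSum ρ p.1 + p.2 := by
  rw [finSigmaFinEquiv_apply, partialSum_eq_sum_castLE]

theorem val_finSigmaFinEquiv_succ (p : Σ i, Fin (ρ i + 1)) :
    (finSigmaFinEquiv p : ℕ) = partialSum ρ p.1 + p.1 + p.2 := by
  rw [finSigmaFinEquiv_apply, partialSum_eq_sum_castLE ρ p.1.2.le, Finset.sum_add_distrib]
  simp

theorem exists_partialSum_le_and_lt_iff (p : Σ i, Fin (ρ i)) {P : Fin h → Prop} :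
    (∃ i : Fin h, partialSum ρ i ≤ finSigmaFinEquiv p ∧
      (finSigmaFinEquiv p : ℕ) < partialSum ρ (i + 1) ∧ P i) ↔ P p.1 := by
  have hp := val_finSigmaFinEquiv ρ p
  have hp₁ := partialSum_succ ρ p.1
  refine ⟨fun ⟨i, hle, hlt, hi⟩ ↦ ?_, fun h ↦ ⟨p.1, by omega, by omega, h⟩⟩
  obtain hip | rfl | hip := lt_trichotomy i p.1
  · have := monotone_partialSum ρ (Order.add_one_le_of_lt (Fin.lt_def.mp hip))
    omega
  · exact hi
  · have := monotone_partialSum ρ (Order.add_one_le_of_lt (Fin.lt_def.mp hip))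
    omega

/-- The position in `F̄` of each row of `kroneckerPencil`. -/
def kroneckerRowEquiv {r : ℕ} (hr : ∑ i, ρ i = r) : (Σ i, Fin (ρ i)) ≃ Fin r :=
  finSigmaFinEquiv.trans (finCongr hr)

/-- The position in `F̄` of each column of `kroneckerPencil`. -/
def kroneckerColEquiv {r : ℕ} (hr : ∑ i, ρ i = r) : (Σ i, Fin (ρ i + 1)) ≃ Fin (r + h) :=
  finSigmaFinEquiv.trans (finCongr (by simp [Finset.sum_add_distrib, hr]))

theorem Fbar_eq_reindex_kroneckerPencil {r : ℕ} (hr : ∑ i, ρ i = r) (a b : ℂ) :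
    Fbar ρ r (r + h) a b =
      (kroneckerPencil ρ a b).reindex (kroneckerRowEquiv ρ hr) (kroneckerColEquiv ρ hr) := by
  subst hr
  let e := kroneckerColEquiv ρ rfl
  have he (p) : (e p : ℕ) = partialSum ρ p.1 + p.1 + p.2 := val_finSigmaFinEquiv_succ ρ p
  ext s t
  obtain ⟨p, rfl⟩ := finSigmaFinEquiv.surjective s
  obtain ⟨q, rfl⟩ := e.surjective t
  have hp := val_finSigmaFinEquiv ρ p
  have hfst : (e q : ℕ) = finSigmaFinEquiv p + p.1 ↔ q = ⟨p.1, p.2.castSucc⟩ := by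
    rw [← e.injective.eq_iff, Fin.ext_iff, he ⟨p.1, _⟩, hp, Fin.val_castSucc, Nat.add_right_comm]
  have hsnd : (e q : ℕ) = finSigmaFinEquiv p + p.1 + 1 ↔ q = ⟨p.1, p.2.succ⟩ := by
    rw [← e.injective.eq_iff, Fin.ext_iff, he ⟨p.1, _⟩, hp, Fin.val_succ]
    dsimp only
    omega
  simp only [Fbar, of_apply, exists_partialSum_le_and_lt_iff, hfst, hsnd]
  simp [kroneckerPencil, kroneckerRowEquiv, e]

theorem reindex_sumCongr_fromBlocks {R l m n o l' m' n' o' : Type*} (A : Matrix n l R)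
    (B : Matrix n m R) (C : Matrix o l R) (D : Matrix o m R) (e₁ : n ≃ n') (e₂ : o ≃ o')
    (f₁ : l ≃ l') (f₂ : m ≃ m') :
    (fromBlocks A B C D).reindex (e₁.sumCongr e₂) (f₁.sumCongr f₂) =
      fromBlocks (A.reindex e₁ f₁) (B.reindex e₁ f₂) (C.reindex e₂ f₁) (D.reindex e₂ f₂) := by
  ext (i | i) (j | j) <;> rfl

/-- The position in `F_λ` of each index of `skewPencil`. -/
def skewPencilEquiv {r : ℕ} (hr : ∑ i, ρ i = r) :
    (Σ i, Fin (ρ i)) ⊕ (Σ i, Fin (ρ i + 1)) ≃ Fin (2 * r + h) :=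
  ((kroneckerRowEquiv ρ hr).sumCongr (kroneckerColEquiv ρ hr)).trans
    (finSumFinEquiv.trans (finCongr (by omega)))

theorem Fpencil_eq_reindex_skewPencil {r : ℕ} (hr : ∑ i, ρ i = r) (a b : ℂ) :
    Fpencil ρ r a b =
      (skewPencil ρ a b).reindex (skewPencilEquiv ρ hr) (skewPencilEquiv ρ hr) := by
  have h := reindex_sumCongr_fromBlocks 0 (kroneckerPencil ρ a b) (-(kroneckerPencil ρ a b)ᵀ) 0
    (kroneckerRowEquiv ρ hr) (kroneckerColEquiv ρ hr) (kroneckerRowEquiv ρ hr)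
    (kroneckerColEquiv ρ hr)
  rw [Fpencil, Fbar_eq_reindex_kroneckerPencil ρ hr]
  exact congrArg (reindex _ _) h.symm

/-- The position in `diag(F_λ, 0)` of each index of `diag(skewPencil, 0)`. -/
def paddedPencilEquiv {r k m : ℕ} (hr : ∑ i, ρ i = r) (hm : 2 * r + h + k = m) :
    ((Σ i, Fin (ρ i)) ⊕ (Σ i, Fin (ρ i + 1))) ⊕ Fin k ≃ Fin m :=
  ((skewPencilEquiv ρ hr).sumCongr (Equiv.refl _)).trans (finSumFinEquiv.trans (finCongr hm))

theorem reindex_fromBlocks_Fpencil {r k m : ℕ} (hr : ∑ i, ρ i = r) (hm : 2 * r + h + k = m)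
    (a b : ℂ) :
    (fromBlocks (Fpencil ρ r a b) 0 0 (0 : Matrix (Fin k) (Fin k) ℂ)).reindex
      (finSumFinEquiv.trans (finCongr hm)) (finSumFinEquiv.trans (finCongr hm)) =
    (fromBlocks (skewPencil ρ a b) 0 0 0).reindex (paddedPencilEquiv ρ hr hm)
      (paddedPencilEquiv ρ hr hm) := by
  rw [Fpencil_eq_reindex_skewPencil ρ hr]
  exact congrArg (reindex _ _) (reindex_sumCongr_fromBlocks (skewPencil ρ a b) 0 0 0
    (skewPencilEquiv ρ hr) (Equiv.refl _) (skewPencilEquiv ρ hr) (Equiv.refl _)).symm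

theorem length_le_sum (hρ : ∀ i, 1 ≤ ρ i) : h ≤ ∑ i, ρ i := by
  simpa using Finset.card_nsmul_le_sum Finset.univ ρ 1 fun i _ ↦ hρ i

end StandardPencil

/-- Every 2-dimensional space of skew-symmetric `(N+1)×(N+1)` complex
matrices of constant rank `2r` is congruent to a standard pencil `diag(F_λ, 0)` for
some partition `λ` of `r` of length `h`, padded by a zero block. -/
theorem stmt_5 (r N : ℕ) (hr : 1 ≤ r)
    (M : Submodule ℂ (Matrix (Fin (N+1)) (Fin (N+1)) ℂ))
    (hdim : Module.finrank ℂ M = 2)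
    (hskew : ∀ A ∈ M, Aᵀ = -A)
    (hrank : ∀ A ∈ M, A ≠ 0 → A.rank = 2*r) :
    ∃ h : ℕ, ∃ _hle : 2*r + h ≤ N + 1, 1 ≤ h ∧ h ≤ r ∧
    ∃ rpart : Fin h → ℕ,
      (∀ i, 1 ≤ rpart i) ∧
      (∀ i j, i ≤ j → rpart j ≤ rpart i) ∧
      (∑ i, rpart i = r) ∧
      ∃ S : Matrix (Fin (N+1)) (Fin (N+1)) ℂ, IsUnit S ∧
      ∃ A B, A ∈ M ∧ B ∈ M ∧ LinearIndependent ℂ ![A, B] ∧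
        Submodule.span ℂ {A, B} = M ∧
        S * A * Sᵀ = Matrix.reindex (finSumFinEquiv.trans (finCongr (by omega)))
          (finSumFinEquiv.trans (finCongr (by omega)))
          (Matrix.fromBlocks (Fpencil rpart r 1 0) 0 0
            (0 : Matrix (Fin (N + 1 - (2*r + h))) (Fin (N + 1 - (2*r + h))) ℂ)) ∧
        S * B * Sᵀ = Matrix.reindex (finSumFinEquiv.trans (finCongr (by omega)))
          (finSumFinEquiv.trans (finCongr (by omega)))
          (Matrix.fromBlocks (Fpencil rpart r 0 1) 0 0
            (0 : Matrix (Fin (N + 1 - (2*r + h))) (Fin (N + 1 - (2*r + h))) ℂ)) := by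
  obtain ⟨A, hAM, B, hBM, hlin, hspan⟩ := exists_linearIndependent_pair_span_eq hdim
  have hrankAB (a b : ℂ) (hab : a ≠ 0 ∨ b ≠ 0) : (a • A + b • B).rank = 2 * r :=
    hrank _ (M.add_mem (M.smul_mem a hAM) (M.smul_mem b hBM)) fun h0 ↦
      not_and_or.mpr hab (LinearIndependent.pair_iff.mp hlin a b h0)
  obtain ⟨h, k, ρ, hpos, hanti, hsum, hcard, hcongr⟩ :=
    exists_isUnit_mul_mul_transpose_eq_skewPencil (hskew A hAM) (hskew B hBM) hrankAB
  rw [Fintype.card_fin] at hcard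
  obtain rfl : k = N + 1 - (2 * r + h) := by omega
  obtain ⟨S, hS, hSA, hSB⟩ := hcongr (paddedPencilEquiv ρ hsum hcard.symm)
  have h_pos : 1 ≤ h := Nat.pos_of_ne_zero fun h0 ↦ by
    subst h0
    rw [Fin.sum_univ_zero] at hsum
    omega
  refine ⟨h, by omega, h_pos, hsum ▸ length_le_sum ρ hpos, ρ, hpos, fun i j hij ↦ hanti hij, hsum,
    S, hS, A, B, hAM, hBM, hlin, hspan, ?_, ?_⟩
  · rw [hSA, reindex_fromBlocks_Fpencil ρ hsum]
  · rw [hSB, reindex_fromBlocks_Fpencil ρ hsum]
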